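/- Let c ∈ ℂ³ with c ⬝ᵥ c ≠ 0 and let R be a complex rotation. Define the twisted-pair rotation R' = R * ((2 / (c ⬝ᵥ c)) • vecMulVec c c − 1), where vecMulVec c c is the outer product c * cᵀ. Then: (1) R' is a complex rotation, i.e., R' * (R')ᵀ = 1 and det R' = 1; and (2) the twisted pair yields the same essential matrix: [−c]_× * (R')ᵀ = [c]_× * Rᵀ. -/

import Mathlib

open Matrix

/-- The skew-symmetric "hat" matrix `[c]ₓ` of `c ∈ ℂ³`, so that `[c]ₓ v = c × v`. -/
def crossMat (c : Fin 3 → ℂ) : Matrix (Fin 3) (Fin 3) ℂ :=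
  !![0, -c 2, c 1; c 2, 0, -c 0; -c 1, c 0, 0]

/-!
The twist multiplies `R` by the half-turn `H` about the axis `c`, which fixes `c` and negates the
vectors orthogonal to `c`. It is a symmetric involution, so `R * H` is orthogonal with `R`, and in
dimension three its determinant is `1`. Since `[c]ₓ` kills `c`, it only sees the part that `H`
negates, so `[c]ₓ * H = -[c]ₓ`, and this sign cancels the one in `[-c]ₓ`.
-/

section HalfTurn

variable {m n K : Type*} [Fintype n] [DecidableEq n] [Field K]

/-- The half-turn about the axis `c`: the linear map that is the identity on the line through `c`
and `-1` on its orthogonal complement for the symmetric bilinear form `⬝ᵥ`. For isotropic `c`, that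
is `c ⬝ᵥ c = 0`, the division by zero makes it `-1`. -/
def halfTurn (c : n → K) : Matrix n n K :=
  (2 / (c ⬝ᵥ c)) • vecMulVec c c - 1

theorem transpose_halfTurn (c : n → K) : (halfTurn c)ᵀ = halfTurn c := by
  simp [halfTurn, transpose_vecMulVec]

theorem mul_halfTurn (A : Matrix m n K) (c : n → K) :
    A * halfTurn c = (2 / (c ⬝ᵥ c)) • vecMulVec (A *ᵥ c) c - A := by
  rw [halfTurn, Matrix.mul_sub, Matrix.mul_smul, mul_vecMulVec, Matrix.mul_one]

theorem mul_halfTurn_of_mulVec_eq_zero {A : Matrix m n K} {c : n → K} (hA : A *ᵥ c = 0) :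
    A * halfTurn c = -A := by
  rw [mul_halfTurn, hA, zero_vecMulVec, smul_zero, zero_sub]

theorem halfTurn_mulVec_self {c : n → K} (hc : c ⬝ᵥ c ≠ 0) : halfTurn c *ᵥ c = c := by
  calc halfTurn c *ᵥ c = (2 / (c ⬝ᵥ c) * (c ⬝ᵥ c)) • c - c := by
        simp [halfTurn, sub_mulVec, smul_mulVec, vecMulVec_mulVec, smul_smul]
    _ = c := by rw [div_mul_cancel₀ _ hc, two_smul, add_sub_cancel_right]

theorem halfTurn_mul_self {c : n → K} (hc : c ⬝ᵥ c ≠ 0) : halfTurn c * halfTurn c = 1 := by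
  rw [mul_halfTurn, halfTurn_mulVec_self hc, halfTurn, sub_sub_cancel]

theorem mul_halfTurn_mul_transpose (A : Matrix m n K) {c : n → K} (hc : c ⬝ᵥ c ≠ 0) :
    A * halfTurn c * (A * halfTurn c)ᵀ = A * Aᵀ := by
  rw [transpose_mul, transpose_halfTurn, Matrix.mul_assoc, ← Matrix.mul_assoc (halfTurn c),
    halfTurn_mul_self hc, Matrix.one_mul]

theorem det_one_add_vecMulVec {R : Type*} [CommRing R] (u v : n → R) :
    (1 + vecMulVec u v).det = 1 + v ⬝ᵥ u := by
  rw [vecMulVec_eq Unit, det_one_add_replicateCol_mul_replicateRow]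

theorem det_halfTurn {c : n → K} (hc : c ⬝ᵥ c ≠ 0) :
    (halfTurn c).det = (-1) ^ (Fintype.card n + 1) := by
  have halfTurn_eq_neg : halfTurn c = -(1 + vecMulVec (-(2 / (c ⬝ᵥ c)) • c) c) := by
    rw [halfTurn, smul_vecMulVec, neg_smul, neg_add, neg_neg, neg_add_eq_sub]
  calc (halfTurn c).det
      = (-1) ^ Fintype.card n * (1 - 2 / (c ⬝ᵥ c) * (c ⬝ᵥ c)) := by
        rw [halfTurn_eq_neg, det_neg, det_one_add_vecMulVec, dotProduct_smul, smul_eq_mul,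
          neg_mul, ← sub_eq_add_neg]
    _ = (-1) ^ (Fintype.card n + 1) := by
        rw [div_mul_cancel₀ _ hc]
        ring

end HalfTurn

theorem crossMat_mulVec (c v : Fin 3 → ℂ) : crossMat c *ᵥ v = c ⨯₃ v := by
  ext i
  fin_cases i <;> simp [crossMat, cross_apply, mulVec, dotProduct, Fin.sum_univ_three] <;> ring

theorem crossMat_neg (c : Fin 3 → ℂ) : crossMat (-c) = -crossMat c := by
  simp [crossMat]

theorem crossMat_mul_halfTurn (c : Fin 3 → ℂ) : crossMat c * halfTurn c = -crossMat c :=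
  mul_halfTurn_of_mulVec_eq_zero (by rw [crossMat_mulVec, cross_self])

theorem crossMat_neg_mul_transpose_mul_halfTurn {m : Type*} (c : Fin 3 → ℂ)
    (A : Matrix m (Fin 3) ℂ) : crossMat (-c) * (A * halfTurn c)ᵀ = crossMat c * Aᵀ := by
  rw [transpose_mul, transpose_halfTurn, ← Matrix.mul_assoc, crossMat_neg, Matrix.neg_mul,
    crossMat_mul_halfTurn, neg_neg]

/-- The twisted pair: `R' = R((2/(cᵀc)) c cᵀ − I)` is again a complex rotation, and
the twisted pair `(R', −c)` yields the same essential matrix as `(R, c)`. -/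
theorem stmt17 (c : Fin 3 → ℂ) (hc : c ⬝ᵥ c ≠ 0)
    (R : Matrix (Fin 3) (Fin 3) ℂ) (hR : R * Rᵀ = 1) (hdR : R.det = 1)
    (R' : Matrix (Fin 3) (Fin 3) ℂ)
    (hR' : R' = R * ((2 / (c ⬝ᵥ c)) • vecMulVec c c - 1)) :
    (R' * R'ᵀ = 1 ∧ R'.det = 1) ∧ crossMat (-c) * R'ᵀ = crossMat c * Rᵀ := by
  obtain rfl : R' = R * halfTurn c := hR'
  refine ⟨⟨?orthogonal, ?det_eq_one⟩, ?same_essential_matrix⟩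
  case orthogonal => rw [mul_halfTurn_mul_transpose R hc, hR]
  case det_eq_one =>
    rw [det_mul, hdR, det_halfTurn hc, Fintype.card_fin]
    norm_num
  case same_essential_matrix => exact crossMat_neg_mul_transpose_mul_halfTurn c R
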